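/- Let X1 and X2 be random vectors in ℝ^{d1} and ℝ^{d2} whose joint distribution is absolutely continuous with respect to Lebesgue measure on ℝ^{d1+d2} and satisfies E‖X1‖ < ∞ and E‖X2‖ < ∞. Let (X_{1i}, X_{2i}), i = 1,…,4, be independent copies of (X1, X2). Then E[ ∏_{k=1}^{2} ( ‖X_{k1} − X_{k2}‖ − ‖X_{k1} − X_{k3}‖ − ‖X_{k4} − X_{k2}‖ + ‖X_{k4} − X_{k3}‖ ) ] ≥ 0, with equality if and only if X1 and X2 are independent. -/

import Mathlib

open MeasureTheory

namespace DCov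
open Set Filter Topology

lemma ext_of_ae_Ioi (m m' : Measure ℝ) [IsFiniteMeasure m] [IsFiniteMeasure m']
    (h : ∀ᵐ s : ℝ, m (Ioi s) = m' (Ioi s)) : m = m' := by
  have hd : Dense {s : ℝ | m (Ioi s) = m' (Ioi s)} := Measure.dense_of_ae h
  have hall : ∀ s : ℝ, m (Ioi s) = m' (Ioi s) := by
    intro s
    obtain ⟨u, hu, hmem, hlim⟩ := hd.exists_seq_strictAnti_tendsto s
    have hU : (⋃ n, Ioi (u n)) = Ioi s := by
      ext x
      simp only [mem_iUnion, mem_Ioi]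
      constructor
      · rintro ⟨n, hn⟩
        exact lt_trans (hmem n).1 hn
      · intro hx
        exact ((hlim.eventually (gt_mem_nhds hx))).exists
    have hmono : Monotone (fun n => Ioi (u n)) := fun i j hij =>
      Ioi_subset_Ioi (hu.antitone hij)
    have h1 := tendsto_measure_iUnion_atTop (μ := m) hmono
    have h2 := tendsto_measure_iUnion_atTop (μ := m') hmono
    rw [hU] at h1 h2
    refine tendsto_nhds_unique h1 (h2.congr fun n => ?_)
    exact ((hmem n).2 : m (Ioi (u n)) = m' (Ioi (u n))).symm
  refine Measure.ext_of_generateFrom_of_iUnion (range Ioi) (fun n : ℕ => Ioi (-(n : ℝ)))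
    (BorelSpace.measurable_eq.trans (borel_eq_generateFrom_Ioi ℝ)) isPiSystem_Ioi ?_ ?_ ?_ ?_
  · ext x
    simp only [mem_iUnion, mem_Ioi, mem_univ, iff_true]
    obtain ⟨n, hn⟩ := exists_nat_gt (-x)
    exact ⟨n, by linarith⟩
  · intro n; exact ⟨_, rfl⟩
  · intro n; exact measure_ne_top _ _
  · rintro _ ⟨s, rfl⟩; exact hall s

variable {E : Type*} [NormedAddCommGroup E] [InnerProductSpace ℝ E] [FiniteDimensional ℝ E]
  [MeasurableSpace E] [BorelSpace E]

/-- Parameter measure on half-spaces. -/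
noncomputable def hs (E : Type*) [NormedAddCommGroup E] [InnerProductSpace ℝ E]
    [FiniteDimensional ℝ E] [MeasurableSpace E] [BorelSpace E] : Measure (E × ℝ) :=
  ((volume : Measure E).restrict (Metric.ball 0 1)).prod (volume : Measure ℝ)

instance : SFinite (hs E) := by unfold hs; infer_instance

open Classical in
/-- Half-space indicator. -/
noncomputable def ph (p : E × ℝ) (x : E) : ℝ := if p.2 < inner ℝ p.1 x then 1 else 0

lemma ph_meas : Measurable (fun q : (E × ℝ) × E => ph q.1 q.2) := by
  unfold ph
  refine Measurable.ite ?_ measurable_const measurable_const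
  exact measurableSet_lt (by fun_prop) (by fun_prop)

lemma charFun_smul_eq (m : Measure E) [IsFiniteMeasure m] (t : ℝ) (g : E) :
    charFun m (t • g) = charFun (m.map (fun x => (inner ℝ g x : ℝ))) t := by
  rw [charFun_apply, charFun_apply, integral_map (by fun_prop) (by fun_prop)]
  congr 1
  ext x
  simp [inner_smul_right, real_inner_comm]

lemma ext_of_halfspace (m m' : Measure E) [IsFiniteMeasure m] [IsFiniteMeasure m']
    (h : ∀ᵐ p ∂(hs E), m {x | p.2 < inner ℝ p.1 x} = m' {x | p.2 < inner ℝ p.1 x}) : m = m' := by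
  have h1 := Measure.ae_ae_of_ae_prod h
  have h2 : ∀ᵐ g ∂((volume : Measure E).restrict (Metric.ball 0 1)),
      ∀ t : ℝ, charFun m (t • g) = charFun m' (t • g) := by
    filter_upwards [h1] with g hg t
    rw [charFun_smul_eq, charFun_smul_eq]
    congr 1
    refine ext_of_ae_Ioi _ _ ?_
    filter_upwards [hg] with s hs
    rw [Measure.map_apply (by fun_prop) measurableSet_Ioi,
      Measure.map_apply (by fun_prop) measurableSet_Ioi]
    exact hs
  refine Measure.ext_of_charFun (funext fun v => ?_)
  have hpos : 0 < ‖v‖ + 1 := by positivity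
  have h3 := Measure.eqOn_open_of_ae_eq (f := fun g => charFun m ((‖v‖ + 1) • g))
    (g := fun g => charFun m' ((‖v‖ + 1) • g)) (h2.mono fun g hg => hg _) Metric.isOpen_ball
    (by fun_prop) (by fun_prop)
  have h4 := @h3 ((‖v‖ + 1)⁻¹ • v) (by
    rw [mem_ball_zero_iff, norm_smul, norm_inv, Real.norm_of_nonneg hpos.le, inv_mul_lt_iff₀ hpos]
    linarith)
  simpa [smul_smul, hpos.ne'] using h4

set_option linter.unusedSectionVars false in
lemma ph_int_diff (g : E) (x y : E) :
    Integrable (fun s => (ph (g, s) x - ph (g, s) y) ^ 2) ∧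
    ∫ s, (ph (g, s) x - ph (g, s) y) ^ 2 = |inner ℝ g (x - y)| := by
  have key : (fun s => (ph (g, s) x - ph (g, s) y) ^ 2) =
      (Ico (min (inner ℝ g x) (inner ℝ g y)) (max (inner ℝ g x) (inner ℝ g y)) : Set ℝ).indicator
        (fun _ => (1 : ℝ)) := by
    ext s
    simp only [ph, indicator, mem_Ico, min_le_iff, lt_max_iff]
    grind
  rw [key]
  constructor
  · rw [integrable_indicator_iff measurableSet_Ico]
    exact integrableOn_const (by simp)
  · rw [integral_indicator measurableSet_Ico]
    simp [inner_sub_right, max_sub_min_eq_abs, abs_sub_comm]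

lemma kappa_exists : ∃ κ : ℝ, 0 < κ ∧ ∀ x : E,
    ∫ g in Metric.ball (0 : E) 1, |(inner ℝ g x : ℝ)| = κ * ‖x‖ := by
  rcases subsingleton_or_nontrivial E with hE | hE
  · refine ⟨1, one_pos, fun x => ?_⟩
    have : x = 0 := Subsingleton.elim _ _
    simp [this]
  obtain ⟨e, he⟩ := exists_norm_eq E (zero_le_one (α := ℝ))
  have hint : IntegrableOn (fun g => |(inner ℝ g e : ℝ)|) (Metric.ball (0 : E) 1) :=
    ((by fun_prop : Continuous fun g : E => |(inner ℝ g e : ℝ)|).locallyIntegrable.integrableOn_isCompact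
      (isCompact_closedBall (0 : E) 1)).mono_set Metric.ball_subset_closedBall
  refine ⟨∫ g in Metric.ball (0 : E) 1, |(inner ℝ g e : ℝ)|, ?_, fun x => ?_⟩
  · rw [setIntegral_pos_iff_support_of_nonneg_ae (ae_of_all _ fun g => abs_nonneg _) hint]
    refine IsOpen.measure_pos _ (IsOpen.inter ?_ Metric.isOpen_ball) ⟨(1/2 : ℝ) • e, ?_, ?_⟩
    · exact (by fun_prop : Continuous fun g : E => |(inner ℝ g e : ℝ)|).isOpen_support
    · simp [inner_smul_left, he]
    · simp [norm_smul, he]; norm_num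
  · set U : E ≃ₗᵢ[ℝ] E := Submodule.reflection (Submodule.span ℝ {x - ‖x‖ • e})ᗮ with hU
    have hUx : U x = ‖x‖ • e := Submodule.reflection_sub (by simp [norm_smul, he])
    have hmp := U.measurePreserving
    have h1 := hmp.setIntegral_preimage_emb U.toHomeomorph.measurableEmbedding
      (fun g => |(inner ℝ g (‖x‖ • e) : ℝ)|) (Metric.ball (0 : E) 1)
    have h2 : U ⁻¹' Metric.ball (0 : E) 1 = Metric.ball (0 : E) 1 := by
      ext; simp
    rw [h2] at h1
    rw [← hUx] at h1
    simp only [LinearIsometryEquiv.inner_map_map] at h1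
    rw [h1, hUx]
    simp only [inner_smul_right, abs_mul, abs_norm]
    rw [integral_const_mul, mul_comm]

lemma ph_rep : ∃ κ : ℝ, 0 < κ ∧ ∀ x y : E,
    Integrable (fun p => (ph p x - ph p y) ^ 2) (hs E) ∧
    ∫ p, (ph p x - ph p y) ^ 2 ∂(hs E) = κ * ‖x - y‖ := by
  obtain ⟨κ, hκ, h⟩ := kappa_exists (E := E)
  refine ⟨κ, hκ, fun x y => ?_⟩
  have hm : Measurable (fun p : E × ℝ => (ph p x - ph p y) ^ 2) := by
    have h1 : Measurable (fun p : E × ℝ => ph p x) := ph_meas.comp (by fun_prop : Measurable fun p : E × ℝ => (p, x))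
    have h2 : Measurable (fun p : E × ℝ => ph p y) := ph_meas.comp (by fun_prop : Measurable fun p : E × ℝ => (p, y))
    fun_prop
  have hI : Integrable (fun p => (ph p x - ph p y) ^ 2) (hs E) := by
    unfold hs
    rw [integrable_prod_iff hm.aestronglyMeasurable]
    refine ⟨ae_of_all _ fun g => (ph_int_diff g x y).1, ?_⟩
    simp only [norm_pow, Real.norm_eq_abs, sq_abs, (ph_int_diff _ x y).2]
    exact ((by fun_prop : Continuous fun g : E => |(inner ℝ g (x - y) : ℝ)|).locallyIntegrable.integrableOn_isCompact
      (isCompact_closedBall (0 : E) 1)).mono_set Metric.ball_subset_closedBall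
  refine ⟨hI, ?_⟩
  unfold hs at hI ⊢
  rw [integral_prod _ hI]
  simp only [(ph_int_diff _ x y).2, h]


lemma int4 {α : Type*} [MeasurableSpace α] {m : Measure α} {a b c d : α → ℝ}
    (ha : Integrable a m) (hb : Integrable b m) (hc : Integrable c m) (hd : Integrable d m) :
    ∫ x, (a x - b x - c x + d x) ∂m =
      ∫ x, a x ∂m - ∫ x, b x ∂m - ∫ x, c x ∂m + ∫ x, d x ∂m := by
  have h1 : Integrable (fun x => a x - b x) m := ha.sub hb
  have h2 : Integrable (fun x => a x - b x - c x) m := h1.sub hc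
  rw [integral_add h2 hd, integral_sub h1 hc, integral_sub ha hb]

set_option linter.unusedSectionVars false in
lemma ph_cases (p : E × ℝ) (x : E) : ph p x = 0 ∨ ph p x = 1 := by
  unfold ph; split_ifs <;> simp

lemma ph_alg {κ : ℝ} (h : ∀ x y : E,
    Integrable (fun p => (ph p x - ph p y) ^ 2) (hs E) ∧
    ∫ p, (ph p x - ph p y) ^ 2 ∂(hs E) = κ * ‖x - y‖) (x1 x2 x3 x4 : E) :
    Integrable (fun p => (ph p x1 - ph p x4) * (ph p x2 - ph p x3)) (hs E) ∧
    ∫ p, (ph p x1 - ph p x4) * (ph p x2 - ph p x3) ∂(hs E) =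
      κ * (-1/2) * (‖x1 - x2‖ - ‖x1 - x3‖ - ‖x4 - x2‖ + ‖x4 - x3‖) := by
  have e : (fun p : E × ℝ => (ph p x1 - ph p x4) * (ph p x2 - ph p x3)) =
      fun p => (-1/2) * ((ph p x1 - ph p x2) ^ 2 - (ph p x1 - ph p x3) ^ 2
        - (ph p x4 - ph p x2) ^ 2 + (ph p x4 - ph p x3) ^ 2) := by
    ext p; ring
  have i1 := (h x1 x2).1
  have i2 := (h x1 x3).1
  have i3 := (h x4 x2).1
  have i4 := (h x4 x3).1
  rw [e]
  refine ⟨(((i1.sub i2).sub i3).add i4).const_mul _, ?_⟩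
  rw [integral_const_mul, int4 i1 i2 i3 i4, (h x1 x2).2, (h x1 x3).2, (h x4 x2).2, (h x4 x3).2]
  ring

lemma abs_diff_le_sq (p : E × ℝ) (x y : E) : |ph p x - ph p y| = (ph p x - ph p y) ^ 2 := by
  rcases ph_cases p x with h | h <;> rcases ph_cases p y with h' | h' <;> simp [h, h']

lemma abs_diff_le_one (p : E × ℝ) (x y : E) : |ph p x - ph p y| ≤ 1 := by
  rcases ph_cases p x with h | h <;> rcases ph_cases p y with h' | h' <;> simp [h, h']

lemma ph_abs_bound {κ : ℝ} (h : ∀ x y : E,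
    Integrable (fun p => (ph p x - ph p y) ^ 2) (hs E) ∧
    ∫ p, (ph p x - ph p y) ^ 2 ∂(hs E) = κ * ‖x - y‖) (x1 x2 x3 x4 : E) :
    ∫ p, |(ph p x1 - ph p x4) * (ph p x2 - ph p x3)| ∂(hs E) ≤ κ * ‖x1 - x4‖ := by
  rw [← (h x1 x4).2]
  refine integral_mono (ph_alg h x1 x2 x3 x4).1.abs (h x1 x4).1 fun p => ?_
  simp only [abs_mul]
  rw [← abs_diff_le_sq]
  exact mul_le_of_le_one_right (abs_nonneg _) (abs_diff_le_one _ _ _)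

variable {F : Type*} [NormedAddCommGroup F] [InnerProductSpace ℝ F] [FiniteDimensional ℝ F]
  [MeasurableSpace F] [BorelSpace F]

/-- Product feature. -/
noncomputable def FF (q : (E × ℝ) × (F × ℝ)) (Z : (E × F) × (E × F)) : ℝ :=
  (ph q.1 Z.1.1 - ph q.1 Z.2.1) * (ph q.2 Z.1.2 - ph q.2 Z.2.2)

lemma FF_meas : Measurable (fun r : ((E × ℝ) × (F × ℝ)) × ((E × F) × (E × F)) => FF r.1 r.2) := by
  unfold FF
  have a1 := (ph_meas (E := E)).comp (by fun_prop : Measurable fun r : ((E × ℝ) × (F × ℝ)) × ((E × F) × (E × F)) => (r.1.1, r.2.1.1))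
  have a2 := (ph_meas (E := E)).comp (by fun_prop : Measurable fun r : ((E × ℝ) × (F × ℝ)) × ((E × F) × (E × F)) => (r.1.1, r.2.2.1))
  have a3 := (ph_meas (E := F)).comp (by fun_prop : Measurable fun r : ((E × ℝ) × (F × ℝ)) × ((E × F) × (E × F)) => (r.1.2, r.2.1.2))
  have a4 := (ph_meas (E := F)).comp (by fun_prop : Measurable fun r : ((E × ℝ) × (F × ℝ)) × ((E × F) × (E × F)) => (r.1.2, r.2.2.2))
  exact (a1.sub a2).mul (a3.sub a4)

/-- The kernel. -/
noncomputable def ker (W : ((E × F) × (E × F)) × ((E × F) × (E × F))) : ℝ :=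
  (‖W.1.1.1 - W.2.1.1‖ - ‖W.1.1.1 - W.2.2.1‖ - ‖W.1.2.1 - W.2.1.1‖ + ‖W.1.2.1 - W.2.2.1‖) *
  (‖W.1.1.2 - W.2.1.2‖ - ‖W.1.1.2 - W.2.2.2‖ - ‖W.1.2.2 - W.2.1.2‖ + ‖W.1.2.2 - W.2.2.2‖)

lemma core (μ : Measure (E × F)) [IsProbabilityMeasure μ]
    (h1 : Integrable (fun z => ‖z.1‖) μ) (h2 : Integrable (fun z => ‖z.2‖) μ) :
    ∃ c : ℝ, 0 < c ∧ Integrable (fun q => (∫ Z, FF q Z ∂(μ.prod μ)) ^ 2) ((hs E).prod (hs F)) ∧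
      c * ∫ W, ker W ∂((μ.prod μ).prod (μ.prod μ)) =
      ∫ q, (∫ Z, FF q Z ∂(μ.prod μ)) ^ 2 ∂((hs E).prod (hs F)) := by
  obtain ⟨κ, hκ, hE⟩ := ph_rep (E := E)
  obtain ⟨κ', hκ', hF⟩ := ph_rep (E := F)
  have hpt : ∀ W : ((E × F) × (E × F)) × ((E × F) × (E × F)),
      κ * κ' / 4 * ker W = ∫ q, FF q W.1 * FF q W.2 ∂((hs E).prod (hs F)) := by
    intro W
    have := integral_prod_mul (μ := hs E) (ν := hs F)
      (fun p => (ph p W.1.1.1 - ph p W.1.2.1) * (ph p W.2.1.1 - ph p W.2.2.1))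
      (fun p => (ph p W.1.1.2 - ph p W.1.2.2) * (ph p W.2.1.2 - ph p W.2.2.2))
    rw [(ph_alg hE _ _ _ _).2, (ph_alg hF _ _ _ _).2] at this
    have e : ∀ q : (E × ℝ) × (F × ℝ), FF q W.1 * FF q W.2 =
      ((ph q.1 W.1.1.1 - ph q.1 W.1.2.1) * (ph q.1 W.2.1.1 - ph q.1 W.2.2.1)) *
      ((ph q.2 W.1.1.2 - ph q.2 W.1.2.2) * (ph q.2 W.2.1.2 - ph q.2 W.2.2.2)) := by
      intro q; unfold FF; ring
    simp only [e]
    rw [this]; unfold ker; ring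
  have hI : Integrable (Function.uncurry
      fun (W : ((E × F) × (E × F)) × ((E × F) × (E × F))) (q : (E × ℝ) × (F × ℝ)) =>
        FF q W.1 * FF q W.2) (((μ.prod μ).prod (μ.prod μ)).prod ((hs E).prod (hs F))) := by
    have hm : Measurable (Function.uncurry
      fun (W : ((E × F) × (E × F)) × ((E × F) × (E × F))) (q : (E × ℝ) × (F × ℝ)) =>
        FF q W.1 * FF q W.2) := by
      refine Measurable.mul ?_ ?_
      · exact FF_meas.comp (by fun_prop : Measurable fun r : (((E × F) × (E × F)) × ((E × F) × (E × F))) × ((E × ℝ) × (F × ℝ)) => (r.2, r.1.1))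
      · exact FF_meas.comp (by fun_prop : Measurable fun r : (((E × F) × (E × F)) × ((E × F) × (E × F))) × ((E × ℝ) × (F × ℝ)) => (r.2, r.1.2))
    have e : ∀ (W : ((E × F) × (E × F)) × ((E × F) × (E × F))) (q : (E × ℝ) × (F × ℝ)),
      FF q W.1 * FF q W.2 =
      ((ph q.1 W.1.1.1 - ph q.1 W.1.2.1) * (ph q.1 W.2.1.1 - ph q.1 W.2.2.1)) *
      ((ph q.2 W.2.1.2 - ph q.2 W.2.2.2) * (ph q.2 W.1.1.2 - ph q.2 W.1.2.2)) := by
      intro W q; unfold FF; ring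
    rw [integrable_prod_iff hm.aestronglyMeasurable]
    constructor
    · refine ae_of_all _ fun W => ?_
      simp only [Function.uncurry_apply_pair, e]
      exact (ph_alg hE W.1.1.1 W.2.1.1 W.2.2.1 W.1.2.1).1.mul_prod
        (ph_alg hF W.2.1.2 W.1.1.2 W.1.2.2 W.2.2.2).1
    · have hz1 : Integrable (fun z => z.1) μ := by
        rw [← integrable_norm_iff (by fun_prop)]; exact h1
      have hz2 : Integrable (fun z => z.2) μ := by
        rw [← integrable_norm_iff (by fun_prop)]; exact h2
      have b1 : Integrable (fun Z : (E × F) × (E × F) => κ * ‖Z.1.1 - Z.2.1‖) (μ.prod μ) :=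
        ((hz1.comp_fst μ).sub (hz1.comp_snd μ)).norm.const_mul _
      have b2 : Integrable (fun Z : (E × F) × (E × F) => κ' * ‖Z.1.2 - Z.2.2‖) (μ.prod μ) :=
        ((hz2.comp_fst μ).sub (hz2.comp_snd μ)).norm.const_mul _
      refine (b1.mul_prod b2).mono' ?_ (ae_of_all _ fun W => ?_)
      · exact hm.norm.aestronglyMeasurable.integral_prod_right'
      · rw [Real.norm_of_nonneg (integral_nonneg fun _ => norm_nonneg _)]
        simp only [Function.uncurry_apply_pair, e, norm_mul (_ * _) (_ * _), Real.norm_eq_abs]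
        rw [integral_prod_mul (μ := hs E) (ν := hs F)
          (fun p => |(ph p W.1.1.1 - ph p W.1.2.1) * (ph p W.2.1.1 - ph p W.2.2.1)|)
          (fun p => |(ph p W.2.1.2 - ph p W.2.2.2) * (ph p W.1.1.2 - ph p W.1.2.2)|)]
        exact mul_le_mul (ph_abs_bound hE _ _ _ _) (ph_abs_bound hF _ _ _ _)
          (integral_nonneg fun _ => abs_nonneg _) (by positivity)
  have hsq : ∀ q : (E × ℝ) × (F × ℝ),
      ∫ W, FF q W.1 * FF q W.2 ∂((μ.prod μ).prod (μ.prod μ)) = (∫ Z, FF q Z ∂(μ.prod μ)) ^ 2 := by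
    intro q
    rw [integral_prod_mul (fun Z => FF q Z) (fun Z => FF q Z), sq]
  refine ⟨κ * κ' / 4, by positivity, ?_, ?_⟩
  · have := hI.integral_prod_right
    simpa only [Function.uncurry_apply_pair, hsq] using this
  · rw [← integral_const_mul]
    simp only [hpt]
    rw [integral_integral_swap hI]
    simp only [hsq]

lemma G_eq (μ : Measure (E × F)) [IsProbabilityMeasure μ] (q : (E × ℝ) × (F × ℝ)) :
    ∫ Z, FF q Z ∂(μ.prod μ) = 2 * (μ.real ({x | q.1.2 < inner ℝ q.1.1 x} ×ˢ {y | q.2.2 < inner ℝ q.2.1 y})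
      - μ.fst.real {x | q.1.2 < inner ℝ q.1.1 x} * μ.snd.real {y | q.2.2 < inner ℝ q.2.1 y}) := by
  have mA : MeasurableSet {x : E | q.1.2 < inner ℝ q.1.1 x} :=
    measurableSet_lt (by fun_prop) (by fun_prop)
  have mB : MeasurableSet {y : F | q.2.2 < inner ℝ q.2.1 y} :=
    measurableSet_lt (by fun_prop) (by fun_prop)
  set A := {x : E | q.1.2 < inner ℝ q.1.1 x} with hA
  set B := {y : F | q.2.2 < inner ℝ q.2.1 y} with hB
  have pA : ∀ x : E, ph q.1 x = A.indicator 1 x := by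
    intro x; simp [ph, indicator, hA]
  have pB : ∀ x : F, ph q.2 x = B.indicator 1 x := by
    intro x; simp [ph, indicator, hB]
  have f1 : ∀ z : E × F, ph q.1 z.1 = (A ×ˢ univ).indicator 1 z := by
    intro z; rw [pA]; simp [indicator]
  have f2 : ∀ z : E × F, ph q.2 z.2 = (univ ×ˢ B).indicator 1 z := by
    intro z; rw [pB]; simp [indicator]
  have f3 : ∀ z : E × F, ph q.1 z.1 * ph q.2 z.2 = (A ×ˢ B).indicator 1 z := by
    intro z; rw [pA, pB]; simp [indicator]; grind
  have mC : MeasurableSet (A ×ˢ (univ : Set F)) := mA.prod .univ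
  have mD : MeasurableSet ((univ : Set E) ×ˢ B) := MeasurableSet.univ.prod mB
  have mAB : MeasurableSet (A ×ˢ B) := mA.prod mB
  have i1 : Integrable (fun z : E × F => ph q.1 z.1) μ := by
    simp only [f1]; exact (integrable_const (1 : ℝ)).indicator mC
  have i2 : Integrable (fun z : E × F => ph q.2 z.2) μ := by
    simp only [f2]; exact (integrable_const (1 : ℝ)).indicator mD
  have i3 : Integrable (fun z : E × F => ph q.1 z.1 * ph q.2 z.2) μ := by
    simp only [f3]; exact (integrable_const (1 : ℝ)).indicator mAB
  have v1 : ∫ z, ph q.1 z.1 ∂μ = μ.fst.real A := by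
    simp only [f1]; rw [integral_indicator_one mC, measureReal_def, measureReal_def,
      Measure.fst_apply mA, prod_univ]
  have v2 : ∫ z, ph q.2 z.2 ∂μ = μ.snd.real B := by
    simp only [f2]; rw [integral_indicator_one mD, measureReal_def, measureReal_def,
      Measure.snd_apply mB, univ_prod]
  have v3 : ∫ z, ph q.1 z.1 * ph q.2 z.2 ∂μ = μ.real (A ×ˢ B) := by
    simp only [f3]; rw [integral_indicator_one mAB]
  have e : ∀ Z : (E × F) × (E × F), FF q Z = ph q.1 Z.1.1 * ph q.2 Z.1.2
      - ph q.1 Z.1.1 * ph q.2 Z.2.2 - ph q.2 Z.1.2 * ph q.1 Z.2.1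
      + ph q.1 Z.2.1 * ph q.2 Z.2.2 := by
    intro Z; unfold FF; ring
  simp only [e]
  have j1 := i3.comp_fst μ
  have j2 := i1.mul_prod i2
  have j3 := i2.mul_prod i1
  have j4 := i3.comp_snd μ
  rw [int4 j1 j2 j3 j4,
    integral_fun_fst (fun z : E × F => ph q.1 z.1 * ph q.2 z.2),
    integral_fun_snd (fun z : E × F => ph q.1 z.1 * ph q.2 z.2),
    integral_prod_mul (fun z : E × F => ph q.1 z.1) (fun z : E × F => ph q.2 z.2),
    integral_prod_mul (fun z : E × F => ph q.2 z.2) (fun z : E × F => ph q.1 z.1), v1, v2, v3]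
  simp
  ring

lemma indep_of_ae (μ : Measure (E × F)) [IsProbabilityMeasure μ]
    (h : ∀ᵐ q ∂((hs E).prod (hs F)), ∫ Z, FF q Z ∂(μ.prod μ) = 0) : μ = μ.fst.prod μ.snd := by
  have h' : ∀ᵐ p ∂(hs E), ∀ᵐ r ∂(hs F),
      μ ({x | p.2 < inner ℝ p.1 x} ×ˢ {y | r.2 < inner ℝ r.1 y}) =
        μ.fst {x | p.2 < inner ℝ p.1 x} * μ.snd {y | r.2 < inner ℝ r.1 y} := by
    refine Measure.ae_ae_of_ae_prod (p := fun q : (E × ℝ) × (F × ℝ) =>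
      μ ({x | q.1.2 < inner ℝ q.1.1 x} ×ˢ {y | q.2.2 < inner ℝ q.2.1 y}) =
        μ.fst {x | q.1.2 < inner ℝ q.1.1 x} * μ.snd {y | q.2.2 < inner ℝ q.2.1 y}) ?_
    filter_upwards [h] with q hq
    rw [G_eq] at hq
    simp only [measureReal_def] at hq
    rw [← ENNReal.toReal_eq_toReal_iff' (measure_ne_top _ _)
      (ENNReal.mul_ne_top (measure_ne_top _ _) (measure_ne_top _ _)), ENNReal.toReal_mul]
    linarith
  have s1 : ∀ᵐ p ∂(hs E), ∀ C : Set F, MeasurableSet C →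
      μ ({x | p.2 < inner ℝ p.1 x} ×ˢ C) = μ.fst {x | p.2 < inner ℝ p.1 x} * μ.snd C := by
    filter_upwards [h'] with p hp C hC
    have mA : MeasurableSet {x : E | p.2 < inner ℝ p.1 x} :=
      measurableSet_lt (by fun_prop) (by fun_prop)
    have ap : ∀ C : Set F, MeasurableSet C →
        ((μ.restrict ({x : E | p.2 < inner ℝ p.1 x} ×ˢ univ)).map Prod.snd) C =
        μ ({x : E | p.2 < inner ℝ p.1 x} ×ˢ C) := by
      intro C hC
      rw [Measure.map_apply measurable_snd hC, Measure.restrict_apply (measurable_snd hC)]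
      congr 1; ext z; simp [and_comm]
    have := ext_of_halfspace ((μ.restrict ({x : E | p.2 < inner ℝ p.1 x} ×ˢ univ)).map Prod.snd)
      ((μ.fst {x | p.2 < inner ℝ p.1 x}).toNNReal • μ.snd) (by
        filter_upwards [hp] with r hr
        rw [ap _ (measurableSet_lt (by fun_prop) (by fun_prop)), hr]
        simp [ENNReal.smul_def])
    rw [← ap C hC, this]
    simp [ENNReal.smul_def]
  symm
  refine Measure.prod_eq fun A C hA hC => ?_
  have ap : ∀ A : Set E, MeasurableSet A →
        ((μ.restrict (univ ×ˢ C)).map Prod.fst) A = μ (A ×ˢ C) := by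
    intro A hA
    rw [Measure.map_apply measurable_fst hA, Measure.restrict_apply (measurable_fst hA)]
    congr 1; ext z; simp
  have := ext_of_halfspace ((μ.restrict (univ ×ˢ C)).map Prod.fst)
      ((μ.snd C).toNNReal • μ.fst) (by
        filter_upwards [s1] with r hr
        rw [ap _ (measurableSet_lt (by fun_prop) (by fun_prop)), hr C hC]
        simp [ENNReal.smul_def, mul_comm])
  rw [← ap A hA, this]
  simp [ENNReal.smul_def, mul_comm]

lemma map_pi {P : Type*} [MeasurableSpace P] (μ : Measure P) [IsProbabilityMeasure μ] :
    MeasurePreserving (fun W : (P × P) × (P × P) => (![W.1.1, W.2.1, W.2.2, W.1.2] : Fin 4 → P))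
      ((μ.prod μ).prod (μ.prod μ)) (Measure.pi fun _ : Fin 4 => μ) := by
  have hm : Measurable (fun W : (P × P) × (P × P) =>
      (![W.1.1, W.2.1, W.2.2, W.1.2] : Fin 4 → P)) := by
    refine measurable_pi_lambda _ fun i => ?_
    fin_cases i <;> simp <;> fun_prop
  refine ⟨hm, ?_⟩
  symm
  refine Measure.pi_eq fun s hs => ?_
  rw [Measure.map_apply hm (MeasurableSet.univ_pi hs)]
  have : (fun W : (P × P) × (P × P) => (![W.1.1, W.2.1, W.2.2, W.1.2] : Fin 4 → P)) ⁻¹'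
      (univ.pi s) = (s 0 ×ˢ s 3) ×ˢ (s 1 ×ˢ s 2) := by
    ext W
    simp [Fin.forall_fin_succ]
    tauto
  rw [this]
  simp only [Measure.prod_prod, Fin.prod_univ_four]
  ring

end DCov

/-- for a pair `(X1, X2)` of random vectors in `ℝ^{d1} × ℝ^{d2}` whose joint
law `μ` is absolutely continuous w.r.t. Lebesgue measure and which has finite first moments,
the expectation
`E[∏_{k=1,2} (‖X_{k1}−X_{k2}‖ − ‖X_{k1}−X_{k3}‖ − ‖X_{k4}−X_{k2}‖ + ‖X_{k4}−X_{k3}‖)]`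
(over four independent copies of the pair) is nonnegative, and it vanishes if and only if
`X1` and `X2` are independent (i.e. `μ` is the product of its marginals). -/
theorem distance_covariance_nonneg_and_eq_zero_iff_indep {d1 d2 : ℕ}
    (μ : Measure (EuclideanSpace ℝ (Fin d1) × EuclideanSpace ℝ (Fin d2)))
    [IsProbabilityMeasure μ]
    (h_ac : μ ≪ (volume : Measure (EuclideanSpace ℝ (Fin d1) × EuclideanSpace ℝ (Fin d2))))
    (h_mom1 : Integrable (fun z : EuclideanSpace ℝ (Fin d1) × EuclideanSpace ℝ (Fin d2)
      => ‖z.1‖) μ)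
    (h_mom2 : Integrable (fun z : EuclideanSpace ℝ (Fin d1) × EuclideanSpace ℝ (Fin d2)
      => ‖z.2‖) μ) :
    0 ≤ ∫ x, (‖(x 0).1 - (x 1).1‖ - ‖(x 0).1 - (x 2).1‖ - ‖(x 3).1 - (x 1).1‖
          + ‖(x 3).1 - (x 2).1‖)
        * (‖(x 0).2 - (x 1).2‖ - ‖(x 0).2 - (x 2).2‖ - ‖(x 3).2 - (x 1).2‖
          + ‖(x 3).2 - (x 2).2‖)
        ∂(Measure.pi fun _ : Fin 4 => μ)
    ∧ ((∫ x, (‖(x 0).1 - (x 1).1‖ - ‖(x 0).1 - (x 2).1‖ - ‖(x 3).1 - (x 1).1‖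
          + ‖(x 3).1 - (x 2).1‖)
        * (‖(x 0).2 - (x 1).2‖ - ‖(x 0).2 - (x 2).2‖ - ‖(x 3).2 - (x 1).2‖
          + ‖(x 3).2 - (x 2).2‖)
        ∂(Measure.pi fun _ : Fin 4 => μ)) = 0
      ↔ μ = μ.fst.prod μ.snd) := by
  have hint : ∫ x, (‖(x 0).1 - (x 1).1‖ - ‖(x 0).1 - (x 2).1‖ - ‖(x 3).1 - (x 1).1‖
          + ‖(x 3).1 - (x 2).1‖)
        * (‖(x 0).2 - (x 1).2‖ - ‖(x 0).2 - (x 2).2‖ - ‖(x 3).2 - (x 1).2‖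
          + ‖(x 3).2 - (x 2).2‖)
        ∂(Measure.pi fun _ : Fin 4 => μ) =
      ∫ W, DCov.ker W ∂((μ.prod μ).prod (μ.prod μ)) := by
    rw [← (DCov.map_pi μ).map_eq, integral_map (DCov.map_pi μ).measurable.aemeasurable
      (Continuous.aestronglyMeasurable (by fun_prop))]
    rfl
  rw [hint]
  obtain ⟨c, hc, hI, h⟩ := DCov.core μ h_mom1 h_mom2
  have hnn := integral_nonneg (μ := (DCov.hs (EuclideanSpace ℝ (Fin d1))).prod
    (DCov.hs (EuclideanSpace ℝ (Fin d2))))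
    (f := fun q => (∫ Z, DCov.FF q Z ∂(μ.prod μ)) ^ 2) (fun q => sq_nonneg _)
  rw [← h] at hnn
  refine ⟨nonneg_of_mul_nonneg_right hnn hc, fun h0 => ?_, fun hind => ?_⟩
  · rw [h0, mul_zero] at h
    have h1 := (integral_eq_zero_iff_of_nonneg (fun q => sq_nonneg _) hI).1 h.symm
    refine DCov.indep_of_ae μ ?_
    filter_upwards [h1] with q hq
    exact pow_eq_zero_iff (two_ne_zero) |>.1 hq
  · have hz : ∀ q, ∫ Z, DCov.FF q Z ∂(μ.prod μ) = 0 := by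
      intro q
      rw [DCov.G_eq]
      have : ∀ (A : Set (EuclideanSpace ℝ (Fin d1))) (B : Set (EuclideanSpace ℝ (Fin d2))),
          μ.real (A ×ˢ B) = μ.fst.real A * μ.snd.real B := by
        intro A B
        conv_lhs => rw [hind]
        rw [measureReal_prod_prod]
      rw [this]; simp
    simp only [hz] at h
    simpa [hc.ne'] using h
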